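/- Let Δt > 0, b > 0 and h_min ∈ ℝ. For v ≥ 0 let V_v be the clamped braking velocity sequence V_v(0) = v, V_v(k+1) = max(0, V_v(k) − b·Δt), and let D_v(k) := Δt · Σ_{j=0}^{k−1} (V_v(j) + V_v(j+1))/2. Define the safe set C := {(h, v_f, v_l) ∈ ℝ × [0,∞) × [0,∞) : ∀k ∈ ℕ, h + D_{v_l}(k) − D_{v_f}(k) ≥ h_min}. Suppose (h, v_f, v_l) ∈ C, the follower applies maximum braking for one step, giving new velocity v_f′ := max(0, v_f − b·Δt), and the lead vehicle moves to any new velocity v_l′ with v_l′ ≥ max(0, v_l − b·Δt) (i.e., the lead decelerates no harder than the maximum rate b), with new headway h′ := h + Δt·(v_l + v_l′)/2 − Δt·(v_f + v_f′)/2. Then (h′, v_f′, v_l′) ∈ C. In particular, membership in the safe set is preserved under one closed-loop step in which the follower brakes maximally, so the minimum-distance constraint h ≥ h_min can be persistently satisfied from any state in C. -/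

import Mathlib

/-- The clamped braking velocity sequence: `V_v(0) = v`, `V_v(k+1) = max(0, V_v(k) − b·Δt)`. -/
def clampedBrake (b Δt v : ℝ) : ℕ → ℝ
  | 0 => v
  | k + 1 => max 0 (clampedBrake b Δt v k - b * Δt)

/-- The braking displacement after `k` steps: `D_v(k) = Δt · Σ_{j<k} (V_v(j) + V_v(j+1))/2`. -/
noncomputable def brakeDisp (b Δt v : ℝ) (k : ℕ) : ℝ :=
  Δt * ∑ j ∈ Finset.range k, (clampedBrake b Δt v j + clampedBrake b Δt v (j + 1)) / 2

/-- The safe set `C ⊆ ℝ × [0,∞) × [0,∞)` of headway/velocity configurations from which the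
headway stays at least `h_min` for all future steps when both vehicles brake maximally. -/
def safeSet (b Δt hmin : ℝ) : Set (ℝ × ℝ × ℝ) :=
  {x | 0 ≤ x.2.1 ∧ 0 ≤ x.2.2 ∧
    ∀ k : ℕ, hmin ≤ x.1 + brakeDisp b Δt x.2.2 k - brakeDisp b Δt x.2.1 k}

/-!
If both vehicles brake maximally for one step, the new state is safe because its future is the tail
of the braking trajectory already certified by the old state. A lead vehicle that brakes less hard
only gains: braking displacement is monotone in the initial velocity, so raising the headway and the
lead velocity keeps a state safe.
-/

section Braking

variable {b Δt hmin h h' vf vf' vl vl' : ℝ}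

theorem clampedBrake_max_sub (b Δt v : ℝ) (k : ℕ) :
    clampedBrake b Δt (max 0 (v - b * Δt)) k = clampedBrake b Δt v (k + 1) := by
  induction k with
  | zero => rfl
  | succ k ih => exact congrArg (fun u ↦ max 0 (u - b * Δt)) ih

theorem clampedBrake_mono (b Δt : ℝ) (k : ℕ) : Monotone fun v ↦ clampedBrake b Δt v k := by
  intro v w hvw
  induction k with
  | zero => exact hvw
  | succ k ih => exact max_le_max_left 0 (sub_le_sub_right ih (b * Δt))

theorem brakeDisp_mono (b : ℝ) (hΔt : 0 ≤ Δt) (k : ℕ) : Monotone fun v ↦ brakeDisp b Δt v k := by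
  intro v w hvw
  have hV (j : ℕ) : clampedBrake b Δt v j ≤ clampedBrake b Δt w j := clampedBrake_mono b Δt j hvw
  simp only [brakeDisp]
  gcongr <;> exact hV _

theorem brakeDisp_succ' (b Δt v : ℝ) (k : ℕ) :
    brakeDisp b Δt v (k + 1) =
      Δt * (v + max 0 (v - b * Δt)) / 2 + brakeDisp b Δt (max 0 (v - b * Δt)) k := by
  simp only [brakeDisp, Finset.sum_range_succ', clampedBrake_max_sub, clampedBrake]
  ring

theorem mem_safeSet_brake_step (hmem : (h, vf, vl) ∈ safeSet b Δt hmin) :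
    (h + Δt * (vl + max 0 (vl - b * Δt)) / 2 - Δt * (vf + max 0 (vf - b * Δt)) / 2,
      max 0 (vf - b * Δt), max 0 (vl - b * Δt)) ∈ safeSet b Δt hmin := by
  refine ⟨le_max_left _ _, le_max_left _ _, fun k ↦ ?_⟩
  calc
    hmin ≤ h + brakeDisp b Δt vl (k + 1) - brakeDisp b Δt vf (k + 1) := hmem.2.2 (k + 1)
    _ = _ := by rw [brakeDisp_succ', brakeDisp_succ']; ring

theorem mem_safeSet_of_le (hΔt : 0 ≤ Δt) (hmem : (h, vf, vl) ∈ safeSet b Δt hmin)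
    (hh : h ≤ h') (hvf'_nonneg : 0 ≤ vf') (hvf : vf' ≤ vf) (hvl : vl ≤ vl') :
    (h', vf', vl') ∈ safeSet b Δt hmin := by
  obtain ⟨-, hvl_nonneg, hsafe⟩ := hmem
  refine ⟨hvf'_nonneg, hvl_nonneg.trans hvl, fun k ↦ (hsafe k).trans ?_⟩
  exact sub_le_sub (add_le_add hh (brakeDisp_mono b hΔt k hvl)) (brakeDisp_mono b hΔt k hvf)

end Braking

/-- Persistent feasibility: if `(h, v_f, v_l)` lies in the safe set, the follower applies
maximum braking for one step (`v_f′ = max(0, v_f − b·Δt)`), and the lead vehicle decelerates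
no harder than the maximum rate (`v_l′ ≥ max(0, v_l − b·Δt)`), with the headway updated
trapezoidally to `h′ = h + Δt·(v_l + v_l′)/2 − Δt·(v_f + v_f′)/2`, then `(h′, v_f′, v_l′)`
again lies in the safe set; so the minimum-distance constraint `h ≥ h_min` can be
persistently satisfied from any state in `C`. -/
theorem safeSet_closedLoop_invariant
    (Δt b hmin : ℝ) (hΔt : 0 < Δt) (hb : 0 < b)
    (h vf vl : ℝ) (hmem : (h, vf, vl) ∈ safeSet b Δt hmin)
    (vf' : ℝ) (hvf' : vf' = max 0 (vf - b * Δt))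
    (vl' : ℝ) (hvl' : max 0 (vl - b * Δt) ≤ vl')
    (h' : ℝ) (hh' : h' = h + Δt * (vl + vl') / 2 - Δt * (vf + vf') / 2) :
    (h', vf', vl') ∈ safeSet b Δt hmin := by
  subst hvf' hh'
  have headway_le : h + Δt * (vl + max 0 (vl - b * Δt)) / 2 - Δt * (vf + max 0 (vf - b * Δt)) / 2 ≤
      h + Δt * (vl + vl') / 2 - Δt * (vf + max 0 (vf - b * Δt)) / 2 := by gcongr
  exact mem_safeSet_of_le hΔt.le (mem_safeSet_brake_step hmem) headway_le (le_max_left _ _)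
    le_rfl hvl'
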